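/- Let G = (V_G, E_G) be a finite simple graph and let k ≥ 1 be an integer. Construct the reserve-price instance with n = |V_G|² + |E_G| samples: |V_G|² samples with feature vector 𝟙 (the all-ones vector in ℝ^{V_G}), first bid k and second bid 0; and for each edge e = {u, v} ∈ E_G one sample with feature vector 𝟙_e (equal to 1 in coordinates u and v and 0 elsewhere), first bid 2 and second bid 1.5. For any β ∈ [0, 1]^{V_G}, let E^β be the set of edges of G both of whose endpoints v satisfy β_v ≥ 0.5. Then R(β) ≤ (1/n)·(k·|V_G|² + 1.5·|E_G| + 0.5·|E^β|), where R(β) is the average of r(w · β; b1, b2) over the n samples. -/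

import Mathlib

open Finset
open scoped Classical

/-- The reward function `r(v; b1, b2)`. -/
noncomputable def reward (b1 b2 v : ℝ) : ℝ :=
  if v ≤ b2 then b2 else if v ≤ b1 then v else 0

theorem reward_of_le {b1 b2 v : ℝ} (hv : v ≤ b2) : reward b1 b2 v = b2 :=
  if_pos hv

theorem reward_le {b1 b2 v : ℝ} (hb1 : 0 ≤ b1) (hb : b2 ≤ b1) : reward b1 b2 v ≤ b1 := by
  unfold reward
  split_ifs <;> assumption

theorem reward_add_le {b1 b2 c x y : ℝ} (hb1 : 0 ≤ b1) (hb : b2 ≤ b1) (hx : x ≤ c) (hy : y ≤ c) :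
    reward b1 b2 (x + y) ≤ b2 + if b2 - c ≤ x ∧ b2 - c ≤ y then b1 - b2 else 0 := by
  split_ifs with h
  · simpa only [add_sub_cancel] using reward_le hb1 hb
  · -- If one summand is below `b2 - c`, the cap `c` on the other keeps the total below `b2`.
    have hxy : x + y ≤ b2 := by
      by_contra! hlt
      exact h ⟨by linarith, by linarith⟩
    rw [reward_of_le hxy, add_zero]

/-- The value `𝟙_e · β` of the feature vector of an edge `e`. On a loop `s(a, a)` it counts `β a`
twice. -/
def edgeValue {V : Type*} (β : V → ℝ) : Sym2 V → ℝ :=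
  Sym2.lift ⟨fun a b => β a + β b, fun a b => add_comm (β a) (β b)⟩

theorem edgeValue_mk {V : Type*} (β : V → ℝ) (a b : V) : edgeValue β s(a, b) = β a + β b :=
  rfl

/-- The edges in `E` all of whose endpoints have `β`-coordinate at least `t`. For `t = 0.5` this is
the set `E^β` of the construction. -/
noncomputable def edgesAbove {V : Type*} (E : Finset (Sym2 V)) (β : V → ℝ) (t : ℝ) :
    Finset (Sym2 V) :=
  {e ∈ E | ∀ v ∈ e, t ≤ β v}

theorem reward_edgeValue_le {V : Type*} {b1 b2 c : ℝ} (hb1 : 0 ≤ b1) (hb : b2 ≤ b1)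
    {β : V → ℝ} (hβ : ∀ v, β v ≤ c) (e : Sym2 V) :
    reward b1 b2 (edgeValue β e) ≤ b2 + if ∀ v ∈ e, b2 - c ≤ β v then b1 - b2 else 0 := by
  induction e with
  | _ a b => simpa only [edgeValue_mk, Sym2.ball] using reward_add_le hb1 hb (hβ a) (hβ b)

theorem sum_reward_edgeValue_le {V : Type*} {b1 b2 c : ℝ} (hb1 : 0 ≤ b1) (hb : b2 ≤ b1)
    {β : V → ℝ} (hβ : ∀ v, β v ≤ c) (E : Finset (Sym2 V)) :
    ∑ e ∈ E, reward b1 b2 (edgeValue β e) ≤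
      b2 * #E + (b1 - b2) * #(edgesAbove E β (b2 - c)) :=
  calc ∑ e ∈ E, reward b1 b2 (edgeValue β e)
      ≤ ∑ e ∈ E, (b2 + if ∀ v ∈ e, b2 - c ≤ β v then b1 - b2 else 0) :=
        sum_le_sum fun e _ => reward_edgeValue_le hb1 hb hβ e
    _ = b2 * #E + (b1 - b2) * #(edgesAbove E β (b2 - c)) := by
        rw [sum_add_distrib, ← sum_filter, sum_const, sum_const, nsmul_eq_mul, nsmul_eq_mul,
          mul_comm b2, mul_comm (b1 - b2), edgesAbove]

theorem reward_upper_bound_general {V : Type*} [Fintype V] (E : Finset (Sym2 V))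
    {k : ℝ} (hk : 0 ≤ k) {β : V → ℝ} (hβ : ∀ v, β v ≤ 1) :
    1 / ((Fintype.card V ^ 2 + #E : ℕ) : ℝ) *
        ((Fintype.card V : ℝ) ^ 2 * reward k 0 (∑ v, β v) +
          ∑ e ∈ E, reward 2 1.5 (edgeValue β e)) ≤
      1 / ((Fintype.card V ^ 2 + #E : ℕ) : ℝ) *
        (k * (Fintype.card V : ℝ) ^ 2 + 1.5 * #E + 0.5 * #(edgesAbove E β 0.5)) := by
  have all_ones_le : (Fintype.card V : ℝ) ^ 2 * reward k 0 (∑ v, β v) ≤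
      k * (Fintype.card V : ℝ) ^ 2 := by
    rw [mul_comm k]
    gcongr
    exact reward_le hk hk
  have edges_le : ∑ e ∈ E, reward 2 1.5 (edgeValue β e) ≤
      1.5 * #E + 0.5 * #(edgesAbove E β 0.5) := by
    have h := sum_reward_edgeValue_le (b1 := 2) (b2 := 1.5) (by norm_num) (by norm_num) hβ E
    rwa [show (2 : ℝ) - 1.5 = 0.5 by norm_num, show (1.5 : ℝ) - 1 = 0.5 by norm_num] at h
  rw [add_assoc]
  gcongr

/-- In the hardness reduction instance built from a graph `G` and `k ≥ 1`
(`|V_G|²` samples `(𝟙, k, 0)` and one sample `(𝟙_e, 2, 1.5)` per edge `e`),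
for any `β ∈ [0, 1]^{V_G}` the average revenue is bounded by
`(1/n)(k·|V_G|² + 1.5·|E_G| + 0.5·|E^β|)`, where `E^β` is the set of edges both of whose
endpoints `v` satisfy `β_v ≥ 0.5`. -/
theorem reward_upper_bound {V : Type*} [Fintype V] [DecidableEq V]
    (G : SimpleGraph V) [DecidableRel G.Adj]
    (k : ℕ) (hk : 1 ≤ k)
    (n : ℕ) (hn : n = (Fintype.card V) ^ 2 + G.edgeFinset.card)
    (β : V → ℝ) (hβ : ∀ v, β v ∈ Set.Icc (0 : ℝ) 1)
    (Eβ : Finset (Sym2 V))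
    (hEβ : Eβ = G.edgeFinset.filter (fun e => ∀ v ∈ e, (0.5 : ℝ) ≤ β v)) :
    (1 / (n : ℝ)) *
        (((Fintype.card V) ^ 2 : ℝ) * reward (k : ℝ) 0 (∑ v, β v) +
          ∑ e ∈ G.edgeFinset,
            reward 2 1.5 (Sym2.lift ⟨fun a b => β a + β b, fun a b => by ring⟩ e)) ≤
      (1 / (n : ℝ)) *
        ((k : ℝ) * ((Fintype.card V) ^ 2 : ℝ) + 1.5 * (G.edgeFinset.card : ℝ) +
          0.5 * (Eβ.card : ℝ)) := by
  obtain rfl : Eβ = edgesAbove G.edgeFinset β 0.5 := by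
    ext e
    simp only [hEβ, edgesAbove, mem_filter]
  subst hn
  exact reward_upper_bound_general G.edgeFinset k.cast_nonneg fun v => (hβ v).2
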